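/- arXiv:2509.02231 — 5 statements merged into one kernel-verified Lean document; each statement's English description precedes it below -/
import Mathlib

section
/- Let M be a finitely generated free ℤ-module with finite generating set S, let ψ be an automorphism of M, let I be the image of ψ − id, and let (I, J, 𝔄)_M be a transversality triple. Then there exist constants C₁, C₂ > 0 (depending only on S, ψ and the triple) such that every v ∈ M can be written as v = (ψ(w) − w) + j + a for some w ∈ M, j ∈ J and a ∈ 𝔄 with ‖w‖_S ≤ C₁‖v‖_S and ‖j‖_S ≤ C₂‖v‖_S. -/
/-- Word norm on an additive group with respect to a finite generating set
(negatives of generators allowed). -/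
noncomputable def addWordNorm {M : Type*} [AddCommGroup M] (S : Finset M) (v : M) : ℕ :=
  sInf {n | ∃ l : List M, l.length = n ∧ (∀ x ∈ l, x ∈ S ∨ -x ∈ S) ∧ l.sum = v}

/-!
Read a shortest word for `v` letter by letter, keeping the part read so far in the form
`f w + j + a` with `a ∈ 𝔄`. Appending a letter `s` changes the remainder `a` to `a + s`, which is
decomposed again as `f w' + j' + a'`; the pair `(w', j')` is a carry that is added to `(w, j)`.
There are only finitely many sums `a + s`, so every carry has norm at most some constant `C`, and
after `‖v‖` letters the total is at most `C * ‖v‖`. The empty word has remainder `0 ∈ 𝔄`.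
-/

section AddWordNorm

variable {M : Type*} [AddCommGroup M] {S : Finset M}

theorem addWordNorm_sum_le_length {l : List M} (hl : ∀ x ∈ l, x ∈ S ∨ -x ∈ S) :
    addWordNorm S l.sum ≤ l.length :=
  Nat.sInf_le ⟨l, rfl, hl, rfl⟩

theorem exists_list_length_eq_addWordNorm {v : M} (hv : v ∈ AddSubgroup.closure (S : Set M)) :
    ∃ l : List M, l.length = addWordNorm S v ∧ (∀ x ∈ l, x ∈ S ∨ -x ∈ S) ∧ l.sum = v := by
  rw [← AddSubgroup.mem_toAddSubmonoid, AddSubgroup.closure_toAddSubmonoid] at hv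
  obtain ⟨l, hl, hsum⟩ := AddSubmonoid.exists_list_of_mem_closure hv
  have hlengths :
      {n | ∃ l : List M, l.length = n ∧ (∀ x ∈ l, x ∈ S ∨ -x ∈ S) ∧ l.sum = v}.Nonempty :=
    ⟨l.length, l, rfl, hl, hsum⟩
  exact Nat.sInf_mem hlengths

theorem addWordNorm_zero : addWordNorm S (0 : M) = 0 :=
  Nat.le_zero.mp (addWordNorm_sum_le_length (l := []) (by simp))

theorem addWordNorm_add_le {x y : M} (hx : x ∈ AddSubgroup.closure (S : Set M))
    (hy : y ∈ AddSubgroup.closure (S : Set M)) :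
    addWordNorm S (x + y) ≤ addWordNorm S x + addWordNorm S y := by
  obtain ⟨l, hl_length, hl, rfl⟩ := exists_list_length_eq_addWordNorm hx
  obtain ⟨m, hm_length, hm, rfl⟩ := exists_list_length_eq_addWordNorm hy
  rw [← hl_length, ← hm_length, ← List.sum_append, ← List.length_append]
  exact addWordNorm_sum_le_length fun z hz => (List.mem_append.mp hz).elim (hl z) (hm z)

end AddWordNorm

section Carry

open scoped Pointwise

variable {P M : Type*} {ℓ : P → ℝ}

theorem exists_pos_forall_mem_exists_le_of_finite {r : M → P → Prop} {Y : Set M} (hY : Y.Finite)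
    (hr : ∀ y ∈ Y, ∃ p, r y p) : ∃ C : ℝ, 0 < C ∧ ∀ y ∈ Y, ∃ p, r y p ∧ ℓ p ≤ C := by
  have : Finite Y := hY
  choose p hp using fun y : Y => hr y y.2
  obtain ⟨C, hC⟩ := (Set.finite_range (ℓ ∘ p)).bddAbove
  exact ⟨max C 1, by positivity, fun y hy =>
    ⟨p ⟨y, hy⟩, hp ⟨y, hy⟩, (hC (Set.mem_range_self _)).trans (le_max_left C 1)⟩⟩

theorem exists_sum_eq_map_add_and_le_mul_length [AddMonoid P] [AddMonoid M] {g : P →+ M}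
    {A X : Set M} {C : ℝ} (hℓ_zero : ℓ 0 ≤ 0) (hℓ_add : ∀ p q, ℓ (p + q) ≤ ℓ p + ℓ q)
    (hA : 0 ∈ A) (hcarry : ∀ y ∈ A + X, ∃ p, (∃ a ∈ A, y = g p + a) ∧ ℓ p ≤ C)
    (l : List M) (hl : ∀ x ∈ l, x ∈ X) :
    ∃ p, (∃ a ∈ A, l.sum = g p + a) ∧ ℓ p ≤ C * l.length := by
  induction l using List.reverseRecOn with
  | nil => exact ⟨0, ⟨0, hA, by simp⟩, by simpa using hℓ_zero⟩
  | append_singleton l s ih =>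
    obtain ⟨p, ⟨a, ha, hsum⟩, hp⟩ := ih fun x hx => hl x (List.mem_append_left _ hx)
    have has : a + s ∈ A + X := Set.add_mem_add ha (hl s (by simp))
    obtain ⟨q, ⟨b, hb, hqb⟩, hq⟩ := hcarry _ has
    refine ⟨p + q, ⟨b, hb, ?_⟩, ?_⟩
    · calc (l ++ [s]).sum = g p + (a + s) := by simp [hsum, add_assoc]
        _ = g (p + q) + b := by rw [hqb, map_add, add_assoc]
    · calc ℓ (p + q) ≤ C * l.length + C := (hℓ_add p q).trans (add_le_add hp hq)
        _ = C * (l ++ [s]).length := by simp [mul_add]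

theorem exists_eq_map_add_and_le_mul_addWordNorm [AddMonoid P] [AddCommGroup M] {S : Finset M}
    (hS : AddSubgroup.closure (S : Set M) = ⊤) {g : P →+ M} {A : Set M} (hA_finite : A.Finite)
    (hA : 0 ∈ A) (hℓ_zero : ℓ 0 ≤ 0) (hℓ_add : ∀ p q, ℓ (p + q) ≤ ℓ p + ℓ q)
    (hcover : ∀ v, ∃ p, ∃ a ∈ A, v = g p + a) :
    ∃ C : ℝ, 0 < C ∧ ∀ v, ∃ p, (∃ a ∈ A, v = g p + a) ∧ ℓ p ≤ C * addWordNorm S v := by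
  let X : Set M := {x | x ∈ S ∨ -x ∈ S}
  have hX : X.Finite := S.finite_toSet.union S.finite_toSet.neg
  obtain ⟨C, hC_pos, hcarry⟩ :=
    exists_pos_forall_mem_exists_le_of_finite (ℓ := ℓ) (hA_finite.add hX) fun y _ => hcover y
  refine ⟨C, hC_pos, fun v => ?_⟩
  obtain ⟨l, hl_length, hl, rfl⟩ :=
    exists_list_length_eq_addWordNorm (hS ▸ AddSubgroup.mem_top v)
  rw [← hl_length]
  exact exists_sum_eq_map_add_and_le_mul_length hℓ_zero hℓ_add hA hcarry l hl

end Carry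

theorem transversal_decomposition_general {N M : Type*} [AddCommGroup N] [AddCommGroup M]
    {T : Finset N} (hT : AddSubgroup.closure (T : Set N) = ⊤)
    {S : Finset M} (hS : AddSubgroup.closure (S : Set M) = ⊤)
    (f : N →+ M) (J : AddSubgroup M) (𝔄 : Finset M) (h0 : (0 : M) ∈ 𝔄)
    (hcover : ∀ v : M, ∃ i ∈ f.range, ∃ j ∈ J, ∃ a ∈ 𝔄, v = i + j + a) :
    ∃ C₁ C₂ : ℝ, 0 < C₁ ∧ 0 < C₂ ∧
      ∀ v : M, ∃ w : N, ∃ j ∈ J, ∃ a ∈ 𝔄, v = f w + j + a ∧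
        (addWordNorm T w : ℝ) ≤ C₁ * addWordNorm S v ∧
        (addWordNorm S j : ℝ) ≤ C₂ * addWordNorm S v := by
  let ℓ : N × J → ℝ := fun p => addWordNorm T p.1 + addWordNorm S (p.2 : M)
  have hℓ_zero : ℓ 0 ≤ 0 := by simp [ℓ, addWordNorm_zero]
  have hℓ_add (p q : N × J) : ℓ (p + q) ≤ ℓ p + ℓ q := by
    have hN : addWordNorm T (p.1 + q.1) ≤ addWordNorm T p.1 + addWordNorm T q.1 :=
      addWordNorm_add_le (by simp [hT]) (by simp [hT])
    have hJ : addWordNorm S (p.2 + q.2 : M) ≤ addWordNorm S (p.2 : M) + addWordNorm S (q.2 : M) :=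
      addWordNorm_add_le (by simp [hS]) (by simp [hS])
    simp only [ℓ, Prod.fst_add, Prod.snd_add, AddSubgroup.coe_add]
    exact_mod_cast (add_le_add hN hJ).trans_eq (add_add_add_comm ..)
  have hcover' (v : M) : ∃ p : N × J, ∃ a ∈ (𝔄 : Set M), v = f.coprod J.subtype p + a := by
    obtain ⟨_, ⟨w, rfl⟩, j, hj, a, ha, hv⟩ := hcover v
    exact ⟨(w, ⟨j, hj⟩), a, ha, hv⟩
  obtain ⟨C, hC_pos, hC⟩ :=
    exists_eq_map_add_and_le_mul_addWordNorm hS 𝔄.finite_toSet h0 hℓ_zero hℓ_add hcover'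
  refine ⟨C, C, hC_pos, hC_pos, fun v => ?_⟩
  obtain ⟨⟨w, j⟩, ⟨a, ha, hv⟩, hwj⟩ := hC v
  exact ⟨w, j, j.2, a, ha, hv, (le_add_of_nonneg_right (Nat.cast_nonneg _)).trans hwj,
    (le_add_of_nonneg_left (Nat.cast_nonneg _)).trans hwj⟩

/-- Decomposition `v = (ψ w - w) + j + a` with linear control of the norms of `w` and `j`,
for a transversality triple `(I, J, 𝔄)` with `I` the image of `ψ - id`. -/
theorem transversal_decomposition
    (M : Type*) [AddCommGroup M] [Module ℤ M] [Module.Free ℤ M] [Module.Finite ℤ M]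
    (S : Finset M) (hS : AddSubgroup.closure (S : Set M) = ⊤)
    (ψ : M ≃+ M)
    (J : AddSubgroup M) (𝔄 : Finset M) (h0 : (0 : M) ∈ 𝔄)
    (hIJ : (ψ.toAddMonoidHom - AddMonoidHom.id M).range ⊓ J = ⊥)
    (hindex : ((ψ.toAddMonoidHom - AddMonoidHom.id M).range ⊔ J).index ≠ 0)
    (hcover : ∀ v : M, ∃ i ∈ (ψ.toAddMonoidHom - AddMonoidHom.id M).range,
      ∃ j ∈ J, ∃ a ∈ 𝔄, v = i + j + a) :
    ∃ C₁ C₂ : ℝ, 0 < C₁ ∧ 0 < C₂ ∧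
      ∀ v : M, ∃ w : M, ∃ j ∈ J, ∃ a ∈ 𝔄,
        v = (ψ w - w) + j + a ∧
        (addWordNorm S w : ℝ) ≤ C₁ * addWordNorm S v ∧
        (addWordNorm S j : ℝ) ≤ C₂ * addWordNorm S v :=
  transversal_decomposition_general hS hS (ψ.toAddMonoidHom - AddMonoidHom.id M) J 𝔄 h0 hcover
end

section
/- Let A be a finitely generated free ℤ-module, ω : A × A → ℤ an alternating bilinear form, and H_ω the associated group on A × ℤ. Let ψ_c be an automorphism of A preserving ω (ω(ψ_c a, ψ_c a') = ω(a, a') for all a, a') and ψ' : A → ℤ a linear map, and let ψ be the automorphism of H_ω given by ψ(a, c) = (ψ_c(a), c + ψ'(a)). Then two elements (a, b) and (a, b') of H_ω are ψ-conjugate if and only if there exists v ∈ A with ψ_c(v) = v and 2ω(v, a) − ψ'(v) = b' − b. -/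
variable {A : Type*} [AddCommGroup A]

/-- The group `H_ω` on `A × ℤ`, with multiplication
`(a, c) * (a', c') = (a + a', c + c' + ω a a')`. -/
def heisGroup (ω : A →ₗ[ℤ] A →ₗ[ℤ] ℤ) : Group (A × ℤ) where
  mul x y := (x.1 + y.1, x.2 + y.2 + ω x.1 y.1)
  one := (0, 0)
  inv x := (-x.1, -x.2 + ω x.1 x.1)
  mul_assoc x y z := by
    show (Prod.mk _ _ : A × ℤ) = Prod.mk _ _
    refine Prod.ext ?_ ?_
    · show x.1 + y.1 + z.1 = x.1 + (y.1 + z.1); exact add_assoc _ _ _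
    · show x.2 + y.2 + ω x.1 y.1 + z.2 + ω (x.1 + y.1) z.1
        = x.2 + (y.2 + z.2 + ω y.1 z.1) + ω x.1 (y.1 + z.1)
      simp only [map_add, LinearMap.add_apply]
      ring
  one_mul x := by
    show (Prod.mk _ _ : A × ℤ) = x
    refine Prod.ext ?_ ?_
    · show (0 : A) + x.1 = x.1; exact zero_add _
    · show (0 : ℤ) + x.2 + ω 0 x.1 = x.2
      simp
  mul_one x := by
    show (Prod.mk _ _ : A × ℤ) = x
    refine Prod.ext ?_ ?_
    · show x.1 + (0 : A) = x.1; exact add_zero _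
    · show x.2 + (0 : ℤ) + ω x.1 0 = x.2
      simp
  inv_mul_cancel x := by
    show (Prod.mk _ _ : A × ℤ) = Prod.mk _ _
    refine Prod.ext ?_ ?_
    · show -x.1 + x.1 = (0 : A); exact neg_add_cancel _
    · show -x.2 + ω x.1 x.1 + x.2 + ω (-x.1) x.1 = (0 : ℤ)
      simp only [map_neg, LinearMap.neg_apply]
      ring

/-- Twisted conjugacy with respect to an arbitrary self-map `ψ`:
`x ∼_ψ y` iff `g * x * (ψ g)⁻¹ = y` for some `g`. -/
def TwistedConjFun {G : Type*} [Group G] (ψ : G → G) (x y : G) : Prop :=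
  ∃ g : G, g * x * (ψ g)⁻¹ = y

theorem twistedConjFun_iff_exists_mul_eq_mul {G : Type*} [Group G] (ψ : G → G) (x y : G) :
    TwistedConjFun ψ x y ↔ ∃ g : G, g * x = y * ψ g :=
  exists_congr fun _ => mul_inv_eq_iff_eq_mul

theorem heisGroup_mk_mul_mk (ω : A →ₗ[ℤ] A →ₗ[ℤ] ℤ) (a a' : A) (c c' : ℤ) :
    letI : Group (A × ℤ) := heisGroup ω
    ((a, c) * (a', c') : A × ℤ) = (a + a', c + c' + ω a a') :=
  rfl

-- `ψ` commutes with translation by the central subgroup `0 × ℤ`, so the coordinate `c` of a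
-- conjugating element `(v, c)` cancels.
theorem heis_twistedConj_mk_mk_iff (ω : A →ₗ[ℤ] A →ₗ[ℤ] ℤ) (ψc : A → A) (ψ' : A → ℤ)
    (a a' : A) (b b' : ℤ) :
    letI : Group (A × ℤ) := heisGroup ω
    (TwistedConjFun (fun p : A × ℤ => (ψc p.1, p.2 + ψ' p.1)) (a, b) (a', b') ↔
      ∃ v : A, v + a = a' + ψc v ∧ b + ω v a = b' + ψ' v + ω a' (ψc v)) := by
  have cancel_central (v : A) (c : ℤ) :
      c + b + ω v a = b' + (c + ψ' v) + ω a' (ψc v) ↔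
        b + ω v a = b' + ψ' v + ω a' (ψc v) := by
    constructor <;> intro h <;> linarith
  simp only [twistedConjFun_iff_exists_mul_eq_mul, Prod.exists, heisGroup_mk_mul_mk,
    Prod.mk.injEq, cancel_central, exists_const]

theorem heis_twistedConj_iff_general (ω : A →ₗ[ℤ] A →ₗ[ℤ] ℤ) (ψc : A → A) (ψ' : A → ℤ)
    (a : A) (b b' : ℤ) :
    letI : Group (A × ℤ) := heisGroup ω
    (TwistedConjFun (fun p : A × ℤ => (ψc p.1, p.2 + ψ' p.1)) (a, b) (a, b') ↔
      ∃ v : A, ψc v = v ∧ ω v a - ω a v - ψ' v = b' - b) := by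
  rw [heis_twistedConj_mk_mk_iff]
  refine exists_congr fun v => ?_
  have fixed_iff : v + a = a + ψc v ↔ ψc v = v := by
    rw [add_comm v a, add_right_inj, eq_comm]
  rw [fixed_iff]
  refine and_congr_right fun hv => ?_
  rw [hv]
  constructor <;> intro h <;> linarith

theorem two_mul_apply_eq_sub_of_isAlt {R M : Type*} [CommRing R] [AddCommMonoid M] [Module R M]
    {B : M →ₗ[R] M →ₗ[R] R} (hB : B.IsAlt) (x y : M) :
    2 * B x y = B x y - B y x := by
  rw [← hB.neg x y, sub_neg_eq_add, two_mul]

/-- Characterisation of twisted conjugacy of elements of `H_ω` with the same first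
coordinate, for the automorphism `ψ(a, c) = (ψ_c a, c + ψ' a)`. -/
theorem heis_twistedConj_iff
    (A : Type*) [AddCommGroup A] [Module.Free ℤ A] [Module.Finite ℤ A]
    (ω : A →ₗ[ℤ] A →ₗ[ℤ] ℤ) (halt : ∀ a : A, ω a a = 0)
    (ψc : A ≃ₗ[ℤ] A) (hpres : ∀ a a' : A, ω (ψc a) (ψc a') = ω a a')
    (ψ' : A →ₗ[ℤ] ℤ) (a : A) (b b' : ℤ) :
    letI : Group (A × ℤ) := heisGroup ω
    (TwistedConjFun (fun p : A × ℤ => (ψc p.1, p.2 + ψ' p.1)) (a, b) (a, b') ↔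
      ∃ v : A, ψc v = v ∧ 2 * ω v a - ψ' v = b' - b) := by
  simp only [two_mul_apply_eq_sub_of_isAlt halt]
  exact heis_twistedConj_iff_general ω ψc ψ' a b b'
end

section
/- Let M be a finitely generated free ℤ-module, ω : M × M → ℤ a non-degenerate alternating bilinear form, and ψ_z an automorphism of M preserving ω (ω(ψ_z a, ψ_z b) = ω(a, b) for all a, b). Let I be the image of ψ_z − id, let J ≤ M be transversal to I, and let K be the kernel of ψ_z − id. Then the map K → Hom_ℤ(J, ℤ) sending k to the restriction ω(k, ·)|_J is an injective ℤ-linear map. -/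
/-- The linear map sending `k ∈ K` to the restriction of `ω k` to `J`. -/
def omegaToDual {M : Type*} [AddCommGroup M] [Module ℤ M]
    (ω : M →ₗ[ℤ] M →ₗ[ℤ] ℤ) (K J : Submodule ℤ M) :
    K →ₗ[ℤ] (J →ₗ[ℤ] ℤ) where
  toFun k := (ω (k : M)).domRestrict J
  map_add' k k' := by ext j; simp
  map_smul' c k := by ext j; simp

section Torsion

variable {R N : Type*} [Ring R] [AddCommGroup N] [Module R N]

theorem isTorsion_quotient_of_index_ne_zero [NoZeroDivisors R] [CharZero R]
    {S : Submodule R N} (hS : S.toAddSubgroup.index ≠ 0) : Module.IsTorsion R (N ⧸ S) := by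
  intro x
  obtain ⟨n, rfl⟩ := S.mkQ_surjective x
  have index_smul_mem : (S.toAddSubgroup.index : R) • n ∈ S := by
    rw [Nat.cast_smul_eq_nsmul]
    exact S.toAddSubgroup.nsmul_index_mem n
  refine ⟨⟨S.toAddSubgroup.index, mem_nonZeroDivisors_of_ne_zero (Nat.cast_ne_zero.mpr hS)⟩, ?_⟩
  exact (Submodule.Quotient.mk_eq_zero S).mpr index_smul_mem

theorem linearMap_eq_zero_of_isTorsion_quotient
    {P : Type*} [AddCommGroup P] [Module R P] [Module.IsTorsionFree R P]
    {φ : N →ₗ[R] P} {S : Submodule R N} (hS : Module.IsTorsion R (N ⧸ S))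
    (hφ : S ≤ LinearMap.ker φ) : φ = 0 := by
  ext n
  obtain ⟨⟨r, hr⟩, hrn⟩ := @hS (S.mkQ n)
  have smul_mem : r • n ∈ S := (Submodule.Quotient.mk_eq_zero S).mp hrn
  have smul_apply_eq_zero : r • φ n = 0 := by rw [← map_smul]; exact hφ smul_mem
  exact (isRegular_iff_mem_nonZeroDivisors.mpr hr).smul_eq_zero_iff_right.mp smul_apply_eq_zero

end Torsion

section Pairing

variable {R M N P : Type*} [CommRing R] [AddCommGroup M] [Module R M]
  [AddCommGroup N] [Module R N] [AddCommGroup P] [Module R P]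
  {B : M →ₗ[R] N →ₗ[R] P} {f : M →ₗ[R] M} {g : N →ₗ[R] N}

theorem range_sub_id_le_ker_of_mem_ker_sub_id (hfg : ∀ a b, B (f a) (g b) = B a b)
    {k : M} (hk : k ∈ LinearMap.ker (f - LinearMap.id)) :
    LinearMap.range (g - LinearMap.id) ≤ LinearMap.ker (B k) := by
  rintro _ ⟨n, rfl⟩
  have fixed : f k = k := sub_eq_zero.mp hk
  calc B k (g n - n) = B k (g n) - B k n := map_sub _ _ _
    _ = B (f k) (g n) - B k n := by rw [fixed]
    _ = 0 := sub_eq_zero.mpr (hfg k n)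

theorem kernel_injects_into_dual_general [Module.IsTorsionFree R P]
    (hB : B.SeparatingLeft) (hfg : ∀ a b, B (f a) (g b) = B a b) {J : Submodule R N}
    (hJ : Module.IsTorsion R (N ⧸ (LinearMap.range (g - LinearMap.id) ⊔ J))) :
    Function.Injective (B.domRestrict₁₂ (LinearMap.ker (f - LinearMap.id)) J) := by
  rw [injective_iff_map_eq_zero]
  rintro ⟨k, hk⟩ restrict_eq_zero
  have range_le : LinearMap.range (g - LinearMap.id) ≤ LinearMap.ker (B k) :=
    range_sub_id_le_ker_of_mem_ker_sub_id hfg hk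
  have J_le : J ≤ LinearMap.ker (B k) := fun j hj =>
    LinearMap.congr_fun restrict_eq_zero ⟨j, hj⟩
  have apply_eq_zero : B k = 0 :=
    linearMap_eq_zero_of_isTorsion_quotient hJ (sup_le range_le J_le)
  exact Subtype.ext (hB k (LinearMap.congr_fun apply_eq_zero))

end Pairing

/-- The two maps have different types: `omegaToDual` uses the canonical `ℤ`-module structures of the
additive groups `K` and `J`, `LinearMap.domRestrict₁₂` those inherited from `M`. -/
theorem omegaToDual_injective_iff {M : Type*} [AddCommGroup M] [Module ℤ M]
    {ω : M →ₗ[ℤ] M →ₗ[ℤ] ℤ} {K J : Submodule ℤ M} :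
    Function.Injective (omegaToDual ω K J) ↔ Function.Injective (ω.domRestrict₁₂ K J) := by
  simp only [Function.Injective, LinearMap.ext_iff]
  rfl

/-- For a non-degenerate alternating form `ω` preserved by `ψ_z`, the map
`K → Hom(J, ℤ)`, `k ↦ ω(k, ·)|_J`, is injective, where `K = ker (ψ_z - id)` and
`J` is transversal to `I = range (ψ_z - id)`. -/
theorem kernel_injects_into_dual
    (M : Type*) [AddCommGroup M] [Module ℤ M] [Module.Free ℤ M] [Module.Finite ℤ M]
    (ω : M →ₗ[ℤ] M →ₗ[ℤ] ℤ)
    (halt : ∀ a : M, ω a a = 0)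
    (hnondeg : ∀ m : M, (∀ m' : M, ω m m' = 0) → m = 0)
    (ψz : M ≃ₗ[ℤ] M) (hpres : ∀ a b : M, ω (ψz a) (ψz b) = ω a b)
    (J : Submodule ℤ M)
    (hIJ : LinearMap.range (ψz.toLinearMap - LinearMap.id) ⊓ J = ⊥)
    (hindex : (LinearMap.range (ψz.toLinearMap - LinearMap.id) ⊔ J).toAddSubgroup.index ≠ 0) :
    Function.Injective
      (omegaToDual ω (LinearMap.ker (ψz.toLinearMap - LinearMap.id)) J) := by
  exact omegaToDual_injective_iff.mpr <|
    kernel_injects_into_dual_general hnondeg hpres (isTorsion_quotient_of_index_ne_zero hindex)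
end

section
/- Let 0 < 𝔡 ≤ l be integers and for i = 1, …, 𝔡 let θ_i : ℤ → ℤ, x ↦ a_i x + b_i be affine maps with a_i ≠ 0. Then, as a function of N, Σ_{λ₁=−N}^{N} Σ_{λ₂=−N}^{N} ⋯ Σ_{λ_l=−N}^{N} gcd(θ₁(λ₁), θ₂(λ₂), …, θ_𝔡(λ_𝔡)) ≃ N^l · d_𝔡(N), where d_𝔡(N) = N if 𝔡 = 1, d_𝔡(N) = ln(N) if 𝔡 = 2, and d_𝔡(N) = 1 if 𝔡 ≥ 3. -/
def GrowthLE (f g : ℕ → ℝ) : Prop :=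
  ∃ c : ℕ, 0 < c ∧ ∀ n : ℕ, max 1 (f n) ≤ c * max 1 (g (c * n))

def GrowthEquiv (f g : ℕ → ℝ) : Prop := GrowthLE f g ∧ GrowthLE g f

/-!
Let `g` be the gcd of the `θ_i(x_i)`, and fix `C ≥ |a_i| + |b_i|`, so that `g ≤ C N` on the box.
The `l - 𝔡` variables that do not enter the gcd contribute the factor `(2 N + 1) ^ (l - 𝔡)`.

For `k ≤ C N` at most `(3 C N / k) ^ 𝔡` points of the box satisfy `k ∣ g`, so the sum of the gcds
is at most `∑ k ≤ C N, k (3 C N / k) ^ 𝔡`, which is of the claimed order.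

For the lower bound with `𝔡 ≥ 2`, let `k ≤ N` be prime to all `a_i`. At least `(N / k) ^ 𝔡` points
satisfy `k ∣ g`, and discarding those with `k m ∣ g` for some large `m` (a convergent series) or
with `g = 0` (at most one point) leaves half of them with `g / k` bounded by a constant `G`. Since
an integer `n` has at most `G` divisors with cofactor at most `G`, summing `k (N / k) ^ 𝔡` over any
set of such `k` counts each gcd a bounded number of times. The single term `k = 1` suffices for
`𝔡 ≥ 3`, and for `𝔡 = 2` the progression `k ≡ 1` modulo a common multiple of the `a_i` gives the
logarithm. For `𝔡 = 1` one pairs `x` with `-x`.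
-/

open Finset

section Growth

theorem growthLE_of_le_mul {f g : ℕ → ℝ} (hg : Monotone g) {C : ℝ} (hC : 0 ≤ C) (c : ℕ)
    (h : ∀ n, 0 < n → f n ≤ C * g (c * n)) : GrowthLE f g := by
  set K : ℕ := 1 + c + ⌈C⌉₊ + ⌈f 0⌉₊
  have one_le_K : (1 : ℝ) ≤ K := by exact_mod_cast (by lia : 1 ≤ K)
  have C_le_K : C ≤ K := (Nat.le_ceil C).trans (by exact_mod_cast (by lia : ⌈C⌉₊ ≤ K))
  have f_zero_le_K : f 0 ≤ K :=
    (Nat.le_ceil (f 0)).trans (by exact_mod_cast (by lia : ⌈f 0⌉₊ ≤ K))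
  refine ⟨K, by lia, fun n ↦ ?_⟩
  have K_le : (K : ℝ) ≤ K * max 1 (g (K * n)) :=
    le_mul_of_one_le_right (by positivity) (le_max_left _ _)
  refine max_le (one_le_K.trans K_le) ?_
  rcases n.eq_zero_or_pos with rfl | hn
  · exact f_zero_le_K.trans K_le
  · calc f n ≤ C * g (c * n) := h n hn
      _ ≤ C * max 1 (g (K * n)) := by
        gcongr
        exact (hg (by gcongr; lia)).trans (le_max_right _ _)
      _ ≤ K * max 1 (g (K * n)) := by gcongr

/-- The factor `d_𝔡(N)` of the asymptotics. It also takes the value `1` at `𝔡 = 0`. -/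
noncomputable def gcdWeight (d N : ℕ) : ℝ :=
  if d = 1 then (N : ℝ) else if d = 2 then Real.log N else 1

theorem gcdWeight_nonneg (d N : ℕ) : 0 ≤ gcdWeight d N := by
  unfold gcdWeight
  split_ifs
  · positivity
  · exact Real.log_natCast_nonneg N
  · exact zero_le_one

theorem gcdWeight_monotone (d : ℕ) : Monotone (gcdWeight d) := by
  intro M N hMN
  unfold gcdWeight
  split_ifs
  · exact_mod_cast hMN
  · rcases M.eq_zero_or_pos with rfl | hM
    · simpa using Real.log_natCast_nonneg N
    · gcongr
  · rfl

theorem pow_mul_gcdWeight_monotone (l d : ℕ) :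
    Monotone fun N : ℕ ↦ (N : ℝ) ^ l * gcdWeight d N := by
  intro M N hMN
  have := gcdWeight_nonneg d M
  dsimp only
  gcongr
  exact gcdWeight_monotone d hMN

theorem harmonic_le_two_mul_log_three_mul {M : ℕ} (hM : 0 < M) :
    (harmonic M : ℝ) ≤ 2 * Real.log (3 * M : ℕ) := by
  have one_le_log : 1 ≤ Real.log (3 * M : ℕ) := by
    have : (1 : ℝ) ≤ M := by exact_mod_cast hM
    rw [Real.le_log_iff_exp_le (by positivity)]
    push_cast
    linarith [Real.exp_one_lt_three]
  calc (harmonic M : ℝ) ≤ 1 + Real.log M := harmonic_le_one_add_log M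
    _ ≤ Real.log (3 * M : ℕ) + Real.log (3 * M : ℕ) := by gcongr; lia
    _ = 2 * Real.log (3 * M : ℕ) := by ring

theorem sum_Icc_div_pow_le_gcdWeight {d M : ℕ} (hd : 0 < d) (hM : 0 < M) :
    ∑ k ∈ Icc 1 M, (k : ℝ) / (k : ℝ) ^ d ≤ 2 * gcdWeight d (3 * M) := by
  have one_le_cast {k : ℕ} (hk : k ∈ Icc 1 M) : (1 : ℝ) ≤ k := by
    exact_mod_cast (mem_Icc.mp hk).1
  have hM' : (1 : ℝ) ≤ M := by exact_mod_cast hM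
  unfold gcdWeight
  split_ifs with h1 h2
  · subst h1
    calc ∑ k ∈ Icc 1 M, (k : ℝ) / (k : ℝ) ^ 1 ≤ ∑ _k ∈ Icc 1 M, (1 : ℝ) :=
          sum_le_sum fun _ _ ↦ by simpa using div_self_le_one _
      _ = M := by simp
      _ ≤ 2 * (3 * M : ℕ) := by push_cast; linarith
  · subst h2
    calc ∑ k ∈ Icc 1 M, (k : ℝ) / (k : ℝ) ^ 2 = harmonic M := by
          rw [harmonic_eq_sum_Icc]
          push_cast
          refine sum_congr rfl fun k hk ↦ ?_
          have := one_le_cast hk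
          field_simp
      _ ≤ 2 * Real.log (3 * M : ℕ) := harmonic_le_two_mul_log_three_mul hM
  · calc ∑ k ∈ Icc 1 M, (k : ℝ) / (k : ℝ) ^ d ≤ ∑ k ∈ Icc 1 M, ((k : ℝ) ^ 2)⁻¹ := by
          refine sum_le_sum fun k hk ↦ ?_
          have hk1 := one_le_cast hk
          calc (k : ℝ) / (k : ℝ) ^ d ≤ (k : ℝ) / (k : ℝ) ^ 3 := by gcongr; lia
            _ = ((k : ℝ) ^ 2)⁻¹ := by field_simp
      _ = ∑ k ∈ Ioo 0 (M + 1), ((k : ℝ) ^ 2)⁻¹ := rfl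
      _ ≤ 2 / ((0 : ℕ) + 1) := sum_Ioo_inv_sq_le 0 (M + 1)
      _ = 2 * 1 := by norm_num

end Growth

section DivisorSums

/-- `k` divides the positive integer `n` with cofactor `n / k` at most `G`. -/
abbrev IsLargeDivisor (G k n : ℕ) : Prop := 0 < n ∧ k ∣ n ∧ n ≤ G * k

variable {α : Type*} {s : Finset α} {g : α → ℕ}

theorem sum_le_sum_mul_card_filter_dvd {M : ℕ} (hg : ∀ x ∈ s, g x ≤ M) :
    ∑ x ∈ s, g x ≤ ∑ k ∈ Icc 1 M, k * #{x ∈ s | k ∣ g x} := by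
  calc ∑ x ∈ s, g x ≤ ∑ x ∈ s, ∑ k ∈ Icc 1 M with k ∣ g x, k := by
        refine sum_le_sum fun x hx ↦ ?_
        rcases (g x).eq_zero_or_pos with h0 | hpos
        · simp [h0]
        · exact single_le_sum (f := id) (fun _ _ ↦ Nat.zero_le _)
            (mem_filter.mpr ⟨mem_Icc.mpr ⟨hpos, hg x hx⟩, dvd_rfl⟩)
    _ = ∑ k ∈ Icc 1 M, k * #{x ∈ s | k ∣ g x} := by
        simp only [sum_filter, card_filter, mul_sum, mul_ite, mul_one, mul_zero]
        exact sum_comm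

theorem sum_isLargeDivisor_le (K : Finset ℕ) (G n : ℕ) :
    ∑ k ∈ K with IsLargeDivisor G k n, k ≤ G * n := by
  have cofactor_mapsTo : Set.MapsTo (n / ·) ↑{k ∈ K | IsLargeDivisor G k n} ↑(Icc 1 G) := by
    intro k hk
    obtain ⟨-, hn, hkn, hnG⟩ := mem_filter.mp hk
    have hk0 := Nat.pos_of_dvd_of_pos hkn hn
    exact mem_coe.mpr (mem_Icc.mpr
      ⟨Nat.div_pos (Nat.le_of_dvd hn hkn) hk0, Nat.div_le_of_le_mul (by rwa [mul_comm])⟩)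
  have cofactor_injOn : Set.InjOn (n / ·) ↑{k ∈ K | IsLargeDivisor G k n} := by
    intro k hk k' hk' h
    obtain ⟨-, hn, hkn, -⟩ := mem_filter.mp hk
    obtain ⟨-, -, hkn', -⟩ := mem_filter.mp hk'
    exact (Nat.div_eq_iff_eq_of_dvd_dvd hn.ne' hkn hkn').mp h
  calc ∑ k ∈ K with IsLargeDivisor G k n, k
      ≤ #{k ∈ K | IsLargeDivisor G k n} • n := by
        refine sum_le_card_nsmul _ _ _ fun k hk ↦ ?_
        obtain ⟨-, hn, hkn, -⟩ := mem_filter.mp hk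
        exact Nat.le_of_dvd hn hkn
    _ ≤ G * n := by
        rw [smul_eq_mul]
        gcongr
        simpa using card_le_card_of_injOn _ cofactor_mapsTo cofactor_injOn

theorem sum_mul_card_filter_isLargeDivisor_le (K : Finset ℕ) (G : ℕ) :
    ∑ k ∈ K, k * #{x ∈ s | IsLargeDivisor G k (g x)} ≤ G * ∑ x ∈ s, g x := by
  calc ∑ k ∈ K, k * #{x ∈ s | IsLargeDivisor G k (g x)}
      = ∑ x ∈ s, ∑ k ∈ K with IsLargeDivisor G k (g x), k := by
        simp only [sum_filter, card_filter, mul_sum, mul_ite, mul_one, mul_zero]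
        exact sum_comm
    _ ≤ ∑ x ∈ s, G * g x := sum_le_sum fun x _ ↦ sum_isLargeDivisor_le K G (g x)
    _ = G * ∑ x ∈ s, g x := (mul_sum _ _ _).symm

theorem card_filter_dvd_le_add_sum {k M : ℕ} (G : ℕ) (hk : 0 < k) (hg : ∀ x ∈ s, g x ≤ M) :
    #{x ∈ s | k ∣ g x} ≤ #{x ∈ s | IsLargeDivisor G k (g x)} + #{x ∈ s | g x = 0} +
      ∑ m ∈ Ioo G (M / k + 1), #{x ∈ s | k * m ∣ g x} := by
  classical
  have cover : {x ∈ s | k ∣ g x} ⊆ {x ∈ s | IsLargeDivisor G k (g x)} ∪ {x ∈ s | g x = 0} ∪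
      (Ioo G (M / k + 1)).biUnion fun m ↦ {x ∈ s | k * m ∣ g x} := by
    intro x hx
    obtain ⟨hxs, m, hm⟩ := mem_filter.mp hx
    have hmM : m < M / k + 1 :=
      Nat.lt_succ_of_le ((Nat.le_div_iff_mul_le hk).mpr (by rw [mul_comm, ← hm]; exact hg x hxs))
    simp only [mem_union, mem_biUnion, mem_filter, mem_Ioo, hxs, true_and]
    rcases (g x).eq_zero_or_pos with h0 | hpos
    · exact .inl (.inr h0)
    · rcases le_or_gt m G with hmG | hmG
      · exact .inl (.inl ⟨hpos, ⟨m, hm⟩, by rw [hm, mul_comm]; gcongr⟩)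
      · exact .inr ⟨m, ⟨hmG, hmM⟩, hm.symm.dvd⟩
  calc _ ≤ _ := card_le_card cover
    _ ≤ _ := card_union_le _ _
    _ ≤ _ := add_le_add (card_union_le _ _) card_biUnion_le

end DivisorSums

section OneVariable

variable {a b : ℤ} {C N k : ℕ}

theorem natAbs_affine_le {x : ℤ} (hC : a.natAbs + b.natAbs ≤ C) (hN : 0 < N)
    (hx : x ∈ Icc (-(N : ℤ)) N) : (a * x + b).natAbs ≤ C * N := by
  have hxN : x.natAbs ≤ N := by rw [mem_Icc] at hx; lia
  calc (a * x + b).natAbs ≤ a.natAbs * x.natAbs + b.natAbs := by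
        rw [← Int.natAbs_mul]; exact Int.natAbs_add_le _ _
    _ ≤ a.natAbs * N + b.natAbs * N := by gcongr; exact Nat.le_mul_of_pos_right _ hN
    _ = (a.natAbs + b.natAbs) * N := by ring
    _ ≤ C * N := by gcongr

theorem card_filter_dvd_affine_le (ha : a ≠ 0) {M : ℕ} (hk : 0 < k)
    {s : Finset ℤ} (hM : ∀ x ∈ s, (a * x + b).natAbs ≤ M) :
    #{x ∈ s | (k : ℤ) ∣ a * x + b} ≤ 2 * (M / k) + 1 := by
  have hk0 : (k : ℤ) ≠ 0 := by exact_mod_cast hk.ne'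
  have quotient_mapsTo : Set.MapsTo (fun x ↦ (a * x + b) / k)
      ↑{x ∈ s | (k : ℤ) ∣ a * x + b} ↑(Icc (-((M / k : ℕ) : ℤ)) (M / k : ℕ)) := by
    intro x hx
    obtain ⟨hxs, q, hq⟩ := mem_filter.mp hx
    have hqM : q.natAbs ≤ M / k := by
      rw [Nat.le_div_iff_mul_le hk, mul_comm, ← Int.natAbs_natCast k, ← Int.natAbs_mul, ← hq]
      exact hM x hxs
    simp only [hq, Int.mul_ediv_cancel_left _ hk0, coe_Icc, Set.mem_Icc]
    lia
  have quotient_injOn : Set.InjOn (fun x ↦ (a * x + b) / k)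
      ↑{x ∈ s | (k : ℤ) ∣ a * x + b} := by
    intro x hx y hy hxy
    have h := (Int.ediv_left_inj (mem_filter.mp hx).2 (mem_filter.mp hy).2).mp hxy
    exact mul_left_cancel₀ ha (add_right_cancel h)
  calc _ ≤ #(Icc (-((M / k : ℕ) : ℤ)) (M / k : ℕ)) :=
        card_le_card_of_injOn _ quotient_mapsTo quotient_injOn
    _ = 2 * (M / k) + 1 := by rw [Int.card_Icc]; lia

theorem card_Icc_filter_dvd_affine_le (ha : a ≠ 0) (hC : a.natAbs + b.natAbs ≤ C)
    (hk : 0 < k) (hkM : k ≤ C * N) :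
    (#{x ∈ Icc (-(N : ℤ)) N | (k : ℤ) ∣ a * x + b} : ℝ) ≤ 3 * C * N / k := by
  have hN : 0 < N := Nat.pos_of_mul_pos_left (hk.trans_le hkM)
  have one_le_quotient : (1 : ℝ) ≤ (C * N / k : ℕ) := by exact_mod_cast Nat.div_pos hkM hk
  calc (#{x ∈ Icc (-(N : ℤ)) N | (k : ℤ) ∣ a * x + b} : ℝ)
      ≤ 2 * (C * N / k : ℕ) + 1 := by
        exact_mod_cast card_filter_dvd_affine_le ha hk fun x ↦ natAbs_affine_le hC hN
    _ ≤ 3 * (C * N / k : ℕ) := by linarith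
    _ ≤ 3 * ((C * N : ℕ) / k) := by gcongr; exact Nat.cast_div_le
    _ = 3 * C * N / k := by push_cast; ring

theorem div_le_card_Ioc_filter_modEq (u v : ℤ) (L : ℕ) (hk : 0 < k) :
    L / k ≤ #{x ∈ Ioc u (u + L) | x ≡ v [ZMOD k]} := by
  have endpoint_eq : (((u + L : ℤ) : ℚ) - v) / (k : ℤ) = L / k + ((u : ℚ) - v) / (k : ℤ) := by
    push_cast
    ring
  have floor_le := Int.le_floor_add ((L : ℚ) / k) (((u : ℚ) - v) / (k : ℤ))
  rw [Rat.floor_natCast_div_natCast, ← endpoint_eq] at floor_le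
  zify
  rw [Int.Ioc_filter_modEq_card _ _ (by exact_mod_cast hk)]
  exact le_max_of_le_left (le_sub_iff_add_le.mpr floor_le)

theorem div_le_card_Icc_filter_dvd_affine (hk : 0 < k) (hak : IsCoprime a k) :
    (2 * N + 1) / k ≤ #{x ∈ Icc (-(N : ℤ)) N | (k : ℤ) ∣ a * x + b} := by
  obtain ⟨u, w, huw⟩ := hak
  refine (div_le_card_Ioc_filter_modEq (-(N : ℤ) - 1) (-b * u) _ hk).trans (card_le_card ?_)
  intro x hx
  obtain ⟨hxN, hxu⟩ := mem_filter.mp hx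
  obtain ⟨t, ht⟩ := Int.modEq_iff_dvd.mp hxu.symm
  refine mem_filter.mpr ⟨by simp only [mem_Ioc, mem_Icc] at hxN ⊢; lia, b * w + a * t, ?_⟩
  linear_combination a * ht - b * huw

theorem div_le_cast_two_mul_add_one_div (hk : 0 < k) (hkN : k ≤ N) :
    (N / k : ℝ) ≤ ((2 * N + 1) / k : ℕ) := by
  rw [div_le_iff₀ (by positivity)]
  have := Nat.lt_mul_div_succ (2 * N + 1) hk
  norm_cast
  nlinarith

theorem sq_le_sum_natAbs_affine (ha : a ≠ 0) (b : ℤ) (N : ℕ) :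
    N ^ 2 ≤ ∑ x ∈ Icc (-(N : ℤ)) N, (a * x + b).natAbs := by
  have sum_natAbs : N * (N + 1) = ∑ x ∈ Icc (-(N : ℤ)) N, x.natAbs := by
    have gauss : (∑ m ∈ range (N + 1), m) * 2 = (N + 1) * N := sum_range_id_mul_two (N + 1)
    have reflect := sum_Icc_of_even_eq_range (f := fun x : ℤ ↦ |x|) (fun x ↦ abs_neg x) N
    simp only [Nat.abs_cast, abs_zero, sub_zero, nsmul_eq_mul] at reflect
    zify at gauss ⊢
    push_cast at gauss reflect
    linarith
  have sum_reflect : ∑ x ∈ Icc (-(N : ℤ)) N, (a * x + b).natAbs =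
      ∑ x ∈ Icc (-(N : ℤ)) N, (a * -x + b).natAbs :=
    sum_equiv (Equiv.neg ℤ) (fun x ↦ by simp only [mem_Icc, Equiv.neg_apply]; lia) (by simp)
  have pointwise (x : ℤ) : 2 * x.natAbs ≤ (a * x + b).natAbs + (a * -x + b).natAbs := by
    have : x.natAbs ≤ (a * x).natAbs := by
      rw [Int.natAbs_mul]
      exact Nat.le_mul_of_pos_left _ (Int.natAbs_pos.mpr ha)
    lia
  have := sum_le_sum fun x (_ : x ∈ Icc (-(N : ℤ)) N) ↦ pointwise x
  rw [← mul_sum, sum_add_distrib, ← sum_reflect, ← sum_natAbs] at this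
  nlinarith

end OneVariable

section AffineGcd

variable {ι : Type*} [Fintype ι]

/-- The gcd of the values `θ_i(x_i) = a_i x_i + b_i`, as a natural number. -/
def affineGcd (a b x : ι → ℤ) : ℕ := (univ.gcd fun i ↦ a i * x i + b i).natAbs

variable {a b x : ι → ℤ} {k : ℕ}

theorem natCast_affineGcd (a b x : ι → ℤ) :
    (affineGcd a b x : ℤ) = univ.gcd fun i ↦ a i * x i + b i := by
  rw [affineGcd, Int.natCast_natAbs, Int.abs_eq_normalize, Finset.normalize_gcd]

theorem dvd_affineGcd_iff : k ∣ affineGcd a b x ↔ ∀ i, (k : ℤ) ∣ a i * x i + b i := by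
  simp [affineGcd, ← Int.natCast_dvd, Finset.dvd_gcd_iff]

theorem affineGcd_eq_zero_iff : affineGcd a b x = 0 ↔ ∀ i, a i * x i + b i = 0 := by
  simp [affineGcd, Finset.gcd_eq_zero_iff]

theorem card_filter_affineGcd_eq_zero_le_one (ha : ∀ i, a i ≠ 0) (s : Finset (ι → ℤ)) :
    #{x ∈ s | affineGcd a b x = 0} ≤ 1 := by
  refine card_le_one.mpr fun x hx y hy ↦ funext fun i ↦ mul_left_cancel₀ (ha i) ?_
  have hxi := affineGcd_eq_zero_iff.mp (mem_filter.mp hx).2 i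
  have hyi := affineGcd_eq_zero_iff.mp (mem_filter.mp hy).2 i
  linarith

end AffineGcd

section Box

variable {ι : Type*} [Fintype ι] [DecidableEq ι]

variable (ι) in
/-- The box `[-N, N]^ι` of integer points over which the gcds are summed. -/
noncomputable def centeredBox (N : ℕ) : Finset (ι → ℤ) :=
  Fintype.piFinset fun _ ↦ Icc (-(N : ℤ)) N

/-- The sum of the gcds over the box, over exactly those variables that enter the gcd. -/
noncomputable def gcdSum (a b : ι → ℤ) (N : ℕ) : ℕ := ∑ x ∈ centeredBox ι N, affineGcd a b x

variable {a b x : ι → ℤ} {C N k : ℕ}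

theorem affineGcd_le (hC : ∀ i, (a i).natAbs + (b i).natAbs ≤ C) (hN : 0 < N)
    (hx : x ∈ centeredBox ι N) : affineGcd a b x ≤ C * N := by
  by_cases h : ∀ i, a i * x i + b i = 0
  · rw [affineGcd_eq_zero_iff.mpr h]
    exact Nat.zero_le _
  · obtain ⟨i, hi⟩ := not_forall.mp h
    calc affineGcd a b x ≤ (a i * x i + b i).natAbs :=
          Nat.le_of_dvd (Int.natAbs_pos.mpr hi)
            (Int.natCast_dvd.mp (dvd_affineGcd_iff.mp dvd_rfl i))
      _ ≤ C * N := natAbs_affine_le (hC i) hN (Fintype.mem_piFinset.mp hx i)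

theorem card_centeredBox_filter_dvd_affineGcd (a b : ι → ℤ) (N k : ℕ) :
    #{x ∈ centeredBox ι N | k ∣ affineGcd a b x} =
      ∏ i, #{t ∈ Icc (-(N : ℤ)) N | (k : ℤ) ∣ a i * t + b i} := by
  rw [← Fintype.card_piFinset]
  congr 1
  ext x
  simp only [centeredBox, mem_filter, Fintype.mem_piFinset, dvd_affineGcd_iff, forall_and]

theorem card_centeredBox_filter_dvd_affineGcd_le (ha : ∀ i, a i ≠ 0)
    (hC : ∀ i, (a i).natAbs + (b i).natAbs ≤ C) (hk : 0 < k) (hkM : k ≤ C * N) :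
    (#{x ∈ centeredBox ι N | k ∣ affineGcd a b x} : ℝ) ≤ (3 * C * N / k) ^ Fintype.card ι := by
  rw [card_centeredBox_filter_dvd_affineGcd, Nat.cast_prod, ← card_univ, ← prod_const]
  gcongr with i
  exact card_Icc_filter_dvd_affine_le (ha i) (hC i) hk hkM

theorem div_pow_le_card_centeredBox_filter_dvd_affineGcd (hk : 0 < k)
    (hak : ∀ i, IsCoprime (a i) k) :
    ((2 * N + 1) / k) ^ Fintype.card ι ≤ #{x ∈ centeredBox ι N | k ∣ affineGcd a b x} := by
  rw [card_centeredBox_filter_dvd_affineGcd, ← card_univ]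
  exact pow_card_le_prod _ _ _ fun i _ ↦ div_le_card_Icc_filter_dvd_affine hk (hak i)

theorem gcdSum_monotone (a b : ι → ℤ) : Monotone (gcdSum a b) := fun M N hMN ↦
  sum_le_sum_of_subset (Fintype.piFinset_subset _ _ fun _ ↦ Icc_subset_Icc (by lia) (by lia))

end Box

section UpperBound

variable {ι : Type*} [Fintype ι] [DecidableEq ι] [Nonempty ι] {a b : ι → ℤ} {C N : ℕ}

theorem gcdSum_le (ha : ∀ i, a i ≠ 0) (hC : ∀ i, (a i).natAbs + (b i).natAbs ≤ C)
    (hC0 : 0 < C) (hN : 0 < N) :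
    (gcdSum a b N : ℝ) ≤
      2 * ((3 * C * N : ℕ) ^ Fintype.card ι * gcdWeight (Fintype.card ι) (3 * C * N)) := by
  set d := Fintype.card ι
  calc (gcdSum a b N : ℝ)
      ≤ ∑ k ∈ Icc 1 (C * N), (k : ℝ) * #{x ∈ centeredBox ι N | k ∣ affineGcd a b x} := by
        exact_mod_cast sum_le_sum_mul_card_filter_dvd fun x hx ↦ affineGcd_le hC hN hx
    _ ≤ ∑ k ∈ Icc 1 (C * N), (k : ℝ) * (3 * C * N / k) ^ d := by
        gcongr with k hk
        exact card_centeredBox_filter_dvd_affineGcd_le ha hC (mem_Icc.mp hk).1 (mem_Icc.mp hk).2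
    _ = (3 * C * N) ^ d * ∑ k ∈ Icc 1 (C * N), (k : ℝ) / (k : ℝ) ^ d := by
        rw [mul_sum]
        exact sum_congr rfl fun k _ ↦ by rw [div_pow]; ring
    _ ≤ (3 * C * N) ^ d * (2 * gcdWeight d (3 * (C * N))) := by
        gcongr
        exact sum_Icc_div_pow_le_gcdWeight Fintype.card_pos (by positivity)
    _ = 2 * ((3 * C * N : ℕ) ^ d * gcdWeight d (3 * C * N)) := by
        rw [mul_assoc 3 C N]
        push_cast
        ring

end UpperBound

section LowerBound

variable {ι : Type*} [Fintype ι] [DecidableEq ι] {a b : ι → ℤ} {C N k : ℕ}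

theorem sum_card_centeredBox_filter_mul_dvd_le (hι : 2 ≤ Fintype.card ι) (ha : ∀ i, a i ≠ 0)
    (hC : ∀ i, (a i).natAbs + (b i).natAbs ≤ C) (hk : 0 < k) (G : ℕ) :
    ∑ m ∈ Ioo G (C * N / k + 1), (#{x ∈ centeredBox ι N | k * m ∣ affineGcd a b x} : ℝ) ≤
      (3 * C * N / k) ^ Fintype.card ι * (2 / (G + 1)) := by
  set d := Fintype.card ι
  calc ∑ m ∈ Ioo G (C * N / k + 1), (#{x ∈ centeredBox ι N | k * m ∣ affineGcd a b x} : ℝ)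
      ≤ ∑ m ∈ Ioo G (C * N / k + 1), (3 * C * N / k : ℝ) ^ d * ((m : ℝ) ^ 2)⁻¹ := by
        refine sum_le_sum fun m hm ↦ ?_
        obtain ⟨hGm, hmM⟩ := mem_Ioo.mp hm
        have hm0 : 0 < m := by lia
        have hm1 : (1 : ℝ) ≤ m := by exact_mod_cast hm0
        have hkm : k * m ≤ C * N := by
          rw [mul_comm]
          exact (Nat.le_div_iff_mul_le hk).mp (Nat.lt_succ_iff.mp hmM)
        calc (#{x ∈ centeredBox ι N | k * m ∣ affineGcd a b x} : ℝ)
            ≤ (3 * C * N / (k * m : ℕ)) ^ d :=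
              card_centeredBox_filter_dvd_affineGcd_le ha hC (by positivity) hkm
          _ = (3 * C * N / k : ℝ) ^ d * ((m : ℝ) ^ d)⁻¹ := by
              rw [← inv_pow, ← mul_pow]
              push_cast
              congr 1
              field_simp
          _ ≤ (3 * C * N / k : ℝ) ^ d * ((m : ℝ) ^ 2)⁻¹ := by gcongr
    _ ≤ (3 * C * N / k) ^ d * (2 / (G + 1)) := by
        rw [← mul_sum]
        gcongr
        exact sum_Ioo_inv_sq_le G _

/-- The cofactor bound beyond which the tail of the sieve costs at most a quarter of the points. -/
abbrev cofactorBound (C d : ℕ) : ℕ := 8 * (3 * C) ^ d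

theorem half_div_pow_le_card_centeredBox_filter_isLargeDivisor (hι : 2 ≤ Fintype.card ι)
    (ha : ∀ i, a i ≠ 0) (hC : ∀ i, (a i).natAbs + (b i).natAbs ≤ C) (hk : 0 < k) (hkN : k ≤ N)
    (hak : ∀ i, IsCoprime (a i) k) :
    (N / k : ℝ) ^ Fintype.card ι / 2 ≤
      #{x ∈ centeredBox ι N |
        IsLargeDivisor (cofactorBound C (Fintype.card ι)) k (affineGcd a b x)} := by
  set d := Fintype.card ι
  set G := cofactorBound C d with hG
  set q := (2 * N + 1) / k
  have hN : 0 < N := hk.trans_le hkN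
  have sieve : (#{x ∈ centeredBox ι N | k ∣ affineGcd a b x} : ℝ) ≤
      #{x ∈ centeredBox ι N | IsLargeDivisor G k (affineGcd a b x)} +
        #{x ∈ centeredBox ι N | affineGcd a b x = 0} +
        ∑ m ∈ Ioo G (C * N / k + 1), (#{x ∈ centeredBox ι N | k * m ∣ affineGcd a b x} : ℝ) := by
    exact_mod_cast card_filter_dvd_le_add_sum G hk fun x hx ↦ affineGcd_le hC hN hx
  have zeros : (#{x ∈ centeredBox ι N | affineGcd a b x = 0} : ℝ) ≤ 1 := by
    exact_mod_cast card_filter_affineGcd_eq_zero_le_one ha _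
  have tail : (3 * C * N / k : ℝ) ^ d * (2 / (G + 1)) ≤ (N / k : ℝ) ^ d / 4 := by
    have hGC : (8 * (3 * C) ^ d : ℝ) = G := by rw [hG]; push_cast; ring
    rw [mul_div_assoc, mul_pow, mul_div_assoc', div_le_div_iff₀ (by positivity) (by positivity)]
    nlinarith [show (0 : ℝ) ≤ (N / k : ℝ) ^ d by positivity]
  have multiples : (q : ℝ) ^ d ≤ #{x ∈ centeredBox ι N | k ∣ affineGcd a b x} := by
    exact_mod_cast div_pow_le_card_centeredBox_filter_dvd_affineGcd hk hak
  have four_le : (4 : ℝ) ≤ (q : ℝ) ^ d := by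
    have two_le : (2 : ℝ) ≤ q := by exact_mod_cast (Nat.le_div_iff_mul_le hk).mpr (by lia)
    calc (4 : ℝ) = 2 ^ 2 := by norm_num
      _ ≤ 2 ^ d := by gcongr; norm_num
      _ ≤ (q : ℝ) ^ d := by gcongr
  have quotient_le : (N / k : ℝ) ^ d ≤ (q : ℝ) ^ d := by
    gcongr
    exact div_le_cast_two_mul_add_one_div hk hkN
  linarith [sum_card_centeredBox_filter_mul_dvd_le (N := N) hι ha hC hk G]

theorem pow_mul_sum_div_pow_le_gcdSum (hι : 2 ≤ Fintype.card ι) (ha : ∀ i, a i ≠ 0)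
    (hC : ∀ i, (a i).natAbs + (b i).natAbs ≤ C) {K : Finset ℕ}
    (hK : ∀ k ∈ K, 0 < k ∧ k ≤ N ∧ ∀ i, IsCoprime (a i) k) :
    (N : ℝ) ^ Fintype.card ι * ∑ k ∈ K, (k : ℝ) / (k : ℝ) ^ Fintype.card ι ≤
      2 * cofactorBound C (Fintype.card ι) * gcdSum a b N := by
  set d := Fintype.card ι
  set G := cofactorBound C d
  calc (N : ℝ) ^ d * ∑ k ∈ K, (k : ℝ) / (k : ℝ) ^ d
      = 2 * ∑ k ∈ K, (k : ℝ) * ((N / k : ℝ) ^ d / 2) := by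
        rw [mul_sum, mul_sum]
        exact sum_congr rfl fun k _ ↦ by rw [div_pow]; ring
    _ ≤ 2 * ∑ k ∈ K, (k : ℝ) * #{x ∈ centeredBox ι N | IsLargeDivisor G k (affineGcd a b x)} := by
        gcongr with k hk
        obtain ⟨hk0, hkN, hak⟩ := hK k hk
        exact half_div_pow_le_card_centeredBox_filter_isLargeDivisor hι ha hC hk0 hkN hak
    _ ≤ 2 * (G * gcdSum a b N) := by
        gcongr
        exact_mod_cast sum_mul_card_filter_isLargeDivisor_le K G
    _ = 2 * G * gcdSum a b N := by ring

theorem pow_card_le_gcdSum (hι : 2 ≤ Fintype.card ι) (ha : ∀ i, a i ≠ 0)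
    (hC : ∀ i, (a i).natAbs + (b i).natAbs ≤ C) (hN : 0 < N) :
    (N : ℝ) ^ Fintype.card ι ≤ 2 * cofactorBound C (Fintype.card ι) * gcdSum a b N := by
  have hK : ∀ k ∈ ({1} : Finset ℕ), 0 < k ∧ k ≤ N ∧ ∀ i, IsCoprime (a i) k := by
    simp [Nat.succ_le_of_lt hN, isCoprime_one_right]
  simpa using pow_mul_sum_div_pow_le_gcdSum hι ha hC hK

theorem harmonic_div_le_sum_arithmeticProgression {A : ℕ} (hA : 0 < A) (n : ℕ) :
    (harmonic n / A : ℝ) ≤ ∑ j ∈ range n, ((1 + A * j : ℕ) : ℝ)⁻¹ := by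
  rw [harmonic, Rat.cast_sum, sum_div]
  refine sum_le_sum fun j _ ↦ ?_
  have le_mul : 1 + A * j ≤ (j + 1) * A := by nlinarith
  push_cast
  rw [div_eq_mul_inv, ← mul_inv]
  gcongr
  exact_mod_cast le_mul

theorem sq_mul_log_le_gcdSum (hι : Fintype.card ι = 2) (ha : ∀ i, a i ≠ 0)
    (hC : ∀ i, (a i).natAbs + (b i).natAbs ≤ C) {A : ℕ} (hA : 0 < A) (haA : ∀ i, a i ∣ A)
    {n : ℕ} (hn : 0 < n) :
    (n : ℝ) ^ 2 * Real.log n ≤ 2 * cofactorBound C 2 * gcdSum a b (A * n) := by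
  set K : Finset ℕ := (range n).image fun j ↦ 1 + A * j
  have hK : ∀ k ∈ K, 0 < k ∧ k ≤ A * n ∧ ∀ i, IsCoprime (a i) k := by
    simp only [K, mem_image, mem_range]
    rintro _ ⟨j, hj, rfl⟩
    refine ⟨by lia, by nlinarith, fun i ↦ ?_⟩
    obtain ⟨e, he⟩ := haA i
    exact ⟨-e * j, 1, by push_cast; rw [he]; ring⟩
  have log_le : Real.log n ≤ harmonic n :=
    (Real.log_le_log (by positivity) (by norm_num)).trans (log_add_one_le_harmonic n)
  have hA1 : (1 : ℝ) ≤ A := by exact_mod_cast hA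
  calc (n : ℝ) ^ 2 * Real.log n ≤ n ^ 2 * (harmonic n : ℝ) := by gcongr
    _ ≤ A * (n ^ 2 * (harmonic n : ℝ)) := by
        have := (Real.log_natCast_nonneg n).trans log_le
        exact le_mul_of_one_le_left (by positivity) hA1
    _ = (A * n : ℕ) ^ 2 * ((harmonic n : ℝ) / A) := by push_cast; field_simp
    _ ≤ (A * n : ℕ) ^ 2 * ∑ j ∈ range n, ((1 + A * j : ℕ) : ℝ)⁻¹ := by
        gcongr
        exact harmonic_div_le_sum_arithmeticProgression hA n
    _ = (A * n : ℕ) ^ 2 * ∑ k ∈ K, (k : ℝ) / (k : ℝ) ^ 2 := by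
        rw [sum_image fun i _ j _ hij ↦ Nat.eq_of_mul_eq_mul_left hA (Nat.add_left_cancel hij)]
        congr 1
        exact sum_congr rfl fun j _ ↦ by field_simp
    _ ≤ 2 * cofactorBound C 2 * gcdSum a b (A * n) := by
        simpa only [hι] using pow_mul_sum_div_pow_le_gcdSum hι.ge ha hC hK

theorem sq_le_gcdSum_of_unique [Unique ι] (ha : a default ≠ 0) (b : ι → ℤ) (N : ℕ) :
    N ^ 2 ≤ gcdSum a b N := by
  have gcdSum_eq : ∑ x ∈ Icc (-(N : ℤ)) N, (a default * x + b default).natAbs = gcdSum a b N :=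
    sum_equiv (Equiv.funUnique ι ℤ).symm (by simp [centeredBox])
      (by simp [affineGcd, ← Int.abs_eq_normalize, Int.natAbs_abs])
  exact gcdSum_eq ▸ sq_le_sum_natAbs_affine ha (b default) N

theorem exists_pow_mul_gcdWeight_le_gcdSum [Nonempty ι] (ha : ∀ i, a i ≠ 0) (b : ι → ℤ) :
    ∃ C : ℝ, 0 ≤ C ∧ ∃ c : ℕ, 0 < c ∧ ∀ n : ℕ, 0 < n →
      (n : ℝ) ^ Fintype.card ι * gcdWeight (Fintype.card ι) n ≤ C * gcdSum a b (c * n) := by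
  obtain ⟨C, hC⟩ := Finite.exists_le fun i ↦ (a i).natAbs + (b i).natAbs
  rcases Nat.lt_trichotomy (Fintype.card ι) 2 with h | h | h
  · have hι : Fintype.card ι = 1 := by have := Fintype.card_pos (α := ι); lia
    obtain ⟨_⟩ := Fintype.card_eq_one_iff_nonempty_unique.mp hι
    refine ⟨1, zero_le_one, 1, one_pos, fun n _ ↦ ?_⟩
    have := sq_le_gcdSum_of_unique (ha default) b n
    rw [hι, gcdWeight, if_pos rfl, ← pow_succ, one_mul, one_mul]
    exact_mod_cast this
  · have hA : 0 < ∏ i, (a i).natAbs := prod_pos fun i _ ↦ Int.natAbs_pos.mpr (ha i)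
    have haA (i : ι) : a i ∣ ((∏ i, (a i).natAbs : ℕ) : ℤ) :=
      Int.dvd_natCast.mpr (dvd_prod_of_mem (fun i ↦ (a i).natAbs) (mem_univ i))
    refine ⟨2 * cofactorBound C 2, by positivity, _, hA, fun n hn ↦ ?_⟩
    simpa [h, gcdWeight] using sq_mul_log_le_gcdSum h ha hC hA haA hn
  · refine ⟨2 * cofactorBound C (Fintype.card ι), by positivity, 1, one_pos, fun n hn ↦ ?_⟩
    rw [gcdWeight, if_neg (by lia), if_neg h.ne', mul_one, one_mul]
    exact pow_card_le_gcdSum h.le ha hC hn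

end LowerBound

section FreeVariables

theorem sum_piFinset_castAdd {α R : Type*} [Semiring R] (d m : ℕ) (S : Finset α)
    (f : (Fin d → α) → R) :
    ∑ x ∈ Fintype.piFinset (fun _ : Fin (d + m) ↦ S), f (fun i ↦ x (Fin.castAdd m i)) =
      (#S : R) ^ m * ∑ y ∈ Fintype.piFinset (fun _ : Fin d ↦ S), f y := by
  have sum_append : ∑ p ∈ Fintype.piFinset (fun _ : Fin d ↦ S) ×ˢ
        Fintype.piFinset (fun _ : Fin m ↦ S), f p.1 =
      ∑ x ∈ Fintype.piFinset (fun _ : Fin (d + m) ↦ S), f (fun i ↦ x (Fin.castAdd m i)) :=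
    sum_equiv (Fin.appendEquiv d m)
      (by simp [Fin.appendEquiv, Fintype.mem_piFinset, Fin.forall_fin_add])
      (by simp [Fin.appendEquiv])
  rw [← sum_append, sum_product]
  simp [← mul_sum]

theorem sum_gcd_castLE_eq_mul_gcdSum {d m : ℕ} (h : d ≤ d + m) (a b : Fin d → ℤ) (N : ℕ) :
    ((∑ x ∈ Fintype.piFinset (fun _ : Fin (d + m) ↦ Icc (-(N : ℤ)) N),
        univ.gcd fun i : Fin d ↦ a i * x (Fin.castLE h i) + b i : ℤ) : ℝ) =
      (2 * N + 1) ^ m * gcdSum a b N := by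
  have card_Icc : (#(Icc (-(N : ℤ)) N) : ℤ) = 2 * N + 1 := by rw [Int.card_Icc]; lia
  have sum_eq : ∑ x ∈ Fintype.piFinset (fun _ : Fin (d + m) ↦ Icc (-(N : ℤ)) N),
      univ.gcd (fun i ↦ a i * x (Fin.castAdd m i) + b i) =
        (2 * N + 1) ^ m * (gcdSum a b N : ℤ) := by
    rw [gcdSum, centeredBox, Nat.cast_sum, ← card_Icc]
    simpa only [natCast_affineGcd] using sum_piFinset_castAdd d m (Icc (-(N : ℤ)) N)
      fun y ↦ (affineGcd a b y : ℤ)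
  exact_mod_cast congrArg (Int.cast : ℤ → ℝ) sum_eq

variable {ι : Type*} [Fintype ι] [DecidableEq ι] [Nonempty ι] {a : ι → ℤ}

theorem growthLE_mul_gcdSum (ha : ∀ i, a i ≠ 0) (b : ι → ℤ) (m : ℕ) :
    GrowthLE (fun N ↦ (2 * N + 1) ^ m * gcdSum a b N)
      (fun N ↦ (N : ℝ) ^ (Fintype.card ι + m) * gcdWeight (Fintype.card ι) N) := by
  set d := Fintype.card ι
  obtain ⟨C, hC⟩ := Finite.exists_le fun i ↦ (a i).natAbs + (b i).natAbs
  have hC0 : 0 < C := by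
    have i := Classical.arbitrary ι
    have := Int.natAbs_pos.mpr (ha i)
    have := hC i
    lia
  refine growthLE_of_le_mul (pow_mul_gcdWeight_monotone _ _) zero_le_two (3 * C) fun N hN ↦ ?_
  have side_le : (2 * N + 1 : ℝ) ≤ (3 * C * N : ℕ) := by exact_mod_cast (by nlinarith)
  calc (2 * N + 1 : ℝ) ^ m * gcdSum a b N
      ≤ (3 * C * N : ℕ) ^ m * (2 * ((3 * C * N : ℕ) ^ d * gcdWeight d (3 * C * N))) := by
        gcongr
        exact gcdSum_le ha hC hC0 hN
    _ = 2 * ((3 * C * N : ℕ) ^ (d + m) * gcdWeight d (3 * C * N)) := by ring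

theorem growthLE_pow_mul_gcdWeight (ha : ∀ i, a i ≠ 0) (b : ι → ℤ) (m : ℕ) :
    GrowthLE (fun N ↦ (N : ℝ) ^ (Fintype.card ι + m) * gcdWeight (Fintype.card ι) N)
      (fun N ↦ (2 * N + 1) ^ m * gcdSum a b N) := by
  set d := Fintype.card ι
  obtain ⟨C, hC, c, hc, lower⟩ := exists_pow_mul_gcdWeight_le_gcdSum ha b
  have monotone_mul_gcdSum : Monotone fun N : ℕ ↦ (2 * N + 1 : ℝ) ^ m * gcdSum a b N := by
    intro M N hMN
    have := gcdSum_monotone a b hMN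
    dsimp only
    gcongr
  refine growthLE_of_le_mul monotone_mul_gcdSum hC c fun n hn ↦ ?_
  have side_le : (n : ℝ) ≤ 2 * (c * n : ℕ) + 1 := by exact_mod_cast (by nlinarith)
  calc (n : ℝ) ^ (d + m) * gcdWeight d n = n ^ m * (n ^ d * gcdWeight d n) := by ring
    _ ≤ (2 * (c * n : ℕ) + 1) ^ m * (C * gcdSum a b (c * n)) :=
        mul_le_mul (by gcongr) (lower n hn)
          (mul_nonneg (by positivity) (gcdWeight_nonneg d n)) (by positivity)
    _ = C * ((2 * (c * n : ℕ) + 1) ^ m * gcdSum a b (c * n)) := by ring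

end FreeVariables

/-- Asymptotics of `Σ_{|λ_i| ≤ N} gcd(θ₁(λ₁), …, θ_𝔡(λ_𝔡))` for non-constant affine
maps `θ_i(x) = a_i x + b_i`. -/
theorem sum_of_gcd_asymptotics
    (dd l : ℕ) (hdd : 0 < dd) (hdl : dd ≤ l)
    (a b : Fin dd → ℤ) (ha : ∀ i, a i ≠ 0) :
    GrowthEquiv
      (fun N : ℕ =>
        ((∑ lam ∈ Fintype.piFinset (fun _ : Fin l => Finset.Icc (-(N : ℤ)) (N : ℤ)),
          Finset.univ.gcd fun i : Fin dd => a i * lam (Fin.castLE hdl i) + b i : ℤ) : ℝ))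
      (fun N : ℕ =>
        (N : ℝ) ^ l *
          (if dd = 1 then (N : ℝ) else if dd = 2 then Real.log N else 1)) := by
  obtain ⟨m, rfl⟩ := Nat.exists_eq_add_of_le hdl
  have : Nonempty (Fin dd) := ⟨⟨0, hdd⟩⟩
  simp only [sum_gcd_castLE_eq_mul_gcdSum]
  have upper := growthLE_mul_gcdSum ha b m
  have lower := growthLE_pow_mul_gcdWeight ha b m
  rw [Fintype.card_fin] at upper lower
  exact ⟨upper, lower⟩
end

section
/- Let m be a positive integer and let φ denote Euler's totient function. Then, as a function of n, the partial sum S_{2,m}(n) = Σ_{0 < i < n, gcd(i,m) = 1} φ(i)/i² satisfies S_{2,m}(n) ≃ ln(n). -/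
/-!
Since `φ(i) ≤ i`, the sum is at most the harmonic sum, hence at most `1 + log n`. For the lower
bound, `∑_{d ∣ n} φ(d) = n` says that `1/n` is the Dirichlet convolution of `φ(i)/i²` and `1/j²`.
Divisors of integers coprime to `m` are coprime to `m`, so the sum of `1/n` over `n < N` coprime
to `m` is at most `S_{2,m}(N) · ∑ 1/j² ≤ 2 S_{2,m}(N)`. The integers `1, m + 1, 2m + 1, …` are
coprime to `m` and already contribute at least `1/m` times a harmonic sum.
-/

open Finset Nat

theorem GrowthLE.of_le_mul_max {f g : ℕ → ℝ} {c : ℕ} (hc : 0 < c)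
    (h : ∀ n, f n ≤ c * max 1 (g (c * n))) : GrowthLE f g :=
  ⟨c, hc, fun n => max_le
    (one_le_mul_of_one_le_of_one_le (mod_cast hc) (le_max_left _ _)) (h n)⟩

theorem sum_Ioo_sum_divisorsAntidiagonal_mul_le {R : Type*} [Semiring R] [PartialOrder R]
    [IsOrderedRing R] {f g : ℕ → R} (hf : ∀ i, 0 ≤ f i) (hg : ∀ j, 0 ≤ g j) (N : ℕ) :
    ∑ n ∈ Ioo 0 N, ∑ p ∈ n.divisorsAntidiagonal, f p.1 * g p.2 ≤
      (∑ i ∈ Ioo 0 N, f i) * ∑ j ∈ Ioo 0 N, g j := by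
  have hdisj : (Ioo 0 N : Set ℕ).PairwiseDisjoint divisorsAntidiagonal :=
    fun a _ b _ hab => disjoint_left.mpr fun p hpa hpb =>
      hab ((mem_divisorsAntidiagonal.mp hpa).1.symm.trans (mem_divisorsAntidiagonal.mp hpb).1)
  have hsub : (Ioo 0 N).biUnion divisorsAntidiagonal ⊆ Ioo 0 N ×ˢ Ioo 0 N := by
    intro p hp
    obtain ⟨n, hn, hpn⟩ := mem_biUnion.mp hp
    have hN : n < N := (mem_Ioo.mp hn).2
    simp only [mem_product, mem_Ioo]
    exact ⟨⟨pos_of_mem_divisors (fst_mem_divisors_of_mem_antidiagonal hpn),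
        (divisor_le (fst_mem_divisors_of_mem_antidiagonal hpn)).trans_lt hN⟩,
      pos_of_mem_divisors (snd_mem_divisors_of_mem_antidiagonal hpn),
        (divisor_le (snd_mem_divisors_of_mem_antidiagonal hpn)).trans_lt hN⟩
  rw [sum_mul_sum, ← sum_product', ← sum_biUnion hdisj]
  exact sum_le_sum_of_subset_of_nonneg hsub fun p _ _ => mul_nonneg (hf _) (hg _)

theorem sum_divisorsAntidiagonal_totient_div_pow_mul_inv_pow {K : Type*} [Field K] (k n : ℕ) :
    ∑ p ∈ n.divisorsAntidiagonal, (φ p.1 : K) / (p.1 : K) ^ k * ((p.2 : K) ^ k)⁻¹ =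
      (n : K) / (n : K) ^ k := by
  calc ∑ p ∈ n.divisorsAntidiagonal, (φ p.1 : K) / (p.1 : K) ^ k * ((p.2 : K) ^ k)⁻¹
      = ∑ p ∈ n.divisorsAntidiagonal, (φ p.1 : K) / (n : K) ^ k := by
        refine sum_congr rfl fun p hp => ?_
        rw [← (mem_divisorsAntidiagonal.mp hp).1, Nat.cast_mul, mul_pow, ← div_eq_mul_inv,
          div_div]
    _ = (n : K) / (n : K) ^ k := by
        rw [← sum_div, sum_divisorsAntidiagonal (fun d _ => (φ d : K)), ← Nat.cast_sum,
          sum_totient]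

/-- The sum `S_{k,m}(n)` of `φ(i) / i ^ k` over the integers `0 < i < n` coprime to `m`. -/
noncomputable def coprimeTotientSum (k m n : ℕ) : ℝ :=
  ∑ i ∈ Ioo 0 n with i.Coprime m, (φ i : ℝ) / (i : ℝ) ^ k

theorem coprimeTotientSum_nonneg (k m n : ℕ) : 0 ≤ coprimeTotientSum k m n :=
  sum_nonneg fun _ _ => by positivity

theorem coprimeTotientSum_mono (k m : ℕ) : Monotone (coprimeTotientSum k m) := fun _ _ h =>
  sum_le_sum_of_subset_of_nonneg (filter_subset_filter _ (Ioo_subset_Ioo_right h))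
    fun _ _ _ => by positivity

theorem coprimeTotientSum_le_sum_Ioo (k m n : ℕ) :
    coprimeTotientSum k m n ≤ ∑ i ∈ Ioo 0 n, (i : ℝ) / (i : ℝ) ^ k :=
  calc coprimeTotientSum k m n
      ≤ ∑ i ∈ Ioo 0 n, (φ i : ℝ) / (i : ℝ) ^ k :=
        sum_le_sum_of_subset_of_nonneg (filter_subset _ _) fun _ _ _ => by positivity
    _ ≤ ∑ i ∈ Ioo 0 n, (i : ℝ) / (i : ℝ) ^ k := by
        gcongr with i
        exact totient_le i

theorem sum_coprime_div_pow_le_coprimeTotientSum_mul (k m N : ℕ) :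
    ∑ n ∈ Ioo 0 N with n.Coprime m, (n : ℝ) / (n : ℝ) ^ k ≤
      coprimeTotientSum k m N * ∑ j ∈ Ioo 0 N, ((j : ℝ) ^ k)⁻¹ := by
  let f : ℕ → ℝ := fun i => if i.Coprime m then (φ i : ℝ) / (i : ℝ) ^ k else 0
  let g : ℕ → ℝ := fun j => ((j : ℝ) ^ k)⁻¹
  have hf : ∀ i, 0 ≤ f i := fun i => by positivity
  have hg : ∀ j, 0 ≤ g j := fun j => by positivity
  have convolution_of_coprime : ∀ n : ℕ, n.Coprime m →
      (n : ℝ) / (n : ℝ) ^ k = ∑ p ∈ n.divisorsAntidiagonal, f p.1 * g p.2 := by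
    intro n hn
    rw [← sum_divisorsAntidiagonal_totient_div_pow_mul_inv_pow]
    refine sum_congr rfl fun p hp => ?_
    have hp_coprime : p.1.Coprime m :=
      hn.coprime_dvd_left (dvd_of_mem_divisors (fst_mem_divisors_of_mem_antidiagonal hp))
    simp only [f, g, if_pos hp_coprime]
  calc ∑ n ∈ Ioo 0 N with n.Coprime m, (n : ℝ) / (n : ℝ) ^ k
      = ∑ n ∈ Ioo 0 N with n.Coprime m, ∑ p ∈ n.divisorsAntidiagonal, f p.1 * g p.2 :=
        sum_congr rfl fun n hn => convolution_of_coprime n (mem_filter.mp hn).2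
    _ ≤ ∑ n ∈ Ioo 0 N, ∑ p ∈ n.divisorsAntidiagonal, f p.1 * g p.2 :=
        sum_le_sum_of_subset_of_nonneg (filter_subset _ _) fun _ _ _ =>
          sum_nonneg fun _ _ => mul_nonneg (hf _) (hg _)
    _ ≤ (∑ i ∈ Ioo 0 N, f i) * ∑ j ∈ Ioo 0 N, g j :=
        sum_Ioo_sum_divisorsAntidiagonal_mul_le hf hg N
    _ = coprimeTotientSum k m N * ∑ j ∈ Ioo 0 N, ((j : ℝ) ^ k)⁻¹ := by
        rw [coprimeTotientSum, sum_filter]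

theorem sum_coprime_inv_le_two_mul_coprimeTotientSum (m N : ℕ) :
    ∑ n ∈ Ioo 0 N with n.Coprime m, (n : ℝ)⁻¹ ≤ 2 * coprimeTotientSum 2 m N := by
  have sum_inv_sq_le : ∑ j ∈ Ioo 0 N, ((j : ℝ) ^ 2)⁻¹ ≤ 2 := by
    simpa using sum_Ioo_inv_sq_le (α := ℝ) 0 N
  calc ∑ n ∈ Ioo 0 N with n.Coprime m, (n : ℝ)⁻¹
      = ∑ n ∈ Ioo 0 N with n.Coprime m, (n : ℝ) / (n : ℝ) ^ 2 := by
        simp only [sq, div_self_mul_self']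
    _ ≤ coprimeTotientSum 2 m N * ∑ j ∈ Ioo 0 N, ((j : ℝ) ^ 2)⁻¹ :=
        sum_coprime_div_pow_le_coprimeTotientSum_mul 2 m N
    _ ≤ coprimeTotientSum 2 m N * 2 :=
        mul_le_mul_of_nonneg_left sum_inv_sq_le (coprimeTotientSum_nonneg 2 m N)
    _ = 2 * coprimeTotientSum 2 m N := mul_comm _ _

theorem harmonic_le_mul_sum_inv_mul_add_one {m : ℕ} (hm : 0 < m) (n : ℕ) :
    (harmonic n : ℝ) ≤ m * ∑ k ∈ range n, ((m * k + 1 : ℕ) : ℝ)⁻¹ := by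
  have hm_one : (1 : ℝ) ≤ m := mod_cast hm
  rw [harmonic, Rat.cast_sum, mul_sum]
  refine sum_le_sum fun k _ => ?_
  push_cast
  rw [← div_eq_mul_inv, inv_eq_one_div, div_le_div_iff₀ (by positivity) (by positivity)]
  linarith

theorem sum_inv_mul_add_one_le_sum_coprime_inv {m : ℕ} (hm : 0 < m) (n : ℕ) :
    ∑ k ∈ range n, ((m * k + 1 : ℕ) : ℝ)⁻¹ ≤
      ∑ i ∈ Ioo 0 (m * n + 1) with i.Coprime m, (i : ℝ)⁻¹ := by
  have hinj : Function.Injective fun k => m * k + 1 := fun _ _ h =>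
    Nat.eq_of_mul_eq_mul_left hm (succ_injective h)
  rw [← sum_image (f := fun i : ℕ => (i : ℝ)⁻¹) hinj.injOn]
  refine sum_le_sum_of_subset_of_nonneg (image_subset_iff.mpr fun k hk => ?_)
    fun _ _ _ => by positivity
  have hlt : m * k < m * n := Nat.mul_lt_mul_of_pos_left (mem_range.mp hk) hm
  simpa using hlt

theorem coprimeTotientSum_two_le_one_add_log (m n : ℕ) :
    coprimeTotientSum 2 m n ≤ 1 + Real.log n :=
  calc coprimeTotientSum 2 m n
      ≤ ∑ i ∈ Ioo 0 n, (i : ℝ) / (i : ℝ) ^ 2 := coprimeTotientSum_le_sum_Ioo 2 m n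
    _ = ∑ i ∈ Ioo 0 n, (i : ℝ)⁻¹ := by simp only [sq, div_self_mul_self']
    _ ≤ ∑ i ∈ Icc 1 n, (i : ℝ)⁻¹ :=
        sum_le_sum_of_subset_of_nonneg Ioo_subset_Ioc_self fun _ _ _ => by positivity
    _ = harmonic n := by rw [harmonic_eq_sum_Icc]; push_cast; rfl
    _ ≤ 1 + Real.log n := harmonic_le_one_add_log n

theorem log_add_one_le_two_mul_coprimeTotientSum {m : ℕ} (hm : 0 < m) (n : ℕ) :
    Real.log (n + 1 : ℕ) ≤ (2 * m : ℕ) * coprimeTotientSum 2 m (m * n + 1) :=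
  calc Real.log (n + 1 : ℕ)
      ≤ harmonic n := log_add_one_le_harmonic n
    _ ≤ m * ∑ k ∈ range n, ((m * k + 1 : ℕ) : ℝ)⁻¹ := harmonic_le_mul_sum_inv_mul_add_one hm n
    _ ≤ m * ∑ i ∈ Ioo 0 (m * n + 1) with i.Coprime m, (i : ℝ)⁻¹ := by
        gcongr
        exact sum_inv_mul_add_one_le_sum_coprime_inv hm n
    _ ≤ m * (2 * coprimeTotientSum 2 m (m * n + 1)) := by
        gcongr
        exact sum_coprime_inv_le_two_mul_coprimeTotientSum m (m * n + 1)
    _ = (2 * m : ℕ) * coprimeTotientSum 2 m (m * n + 1) := by push_cast; ring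

theorem coprimeTotientSum_two_growthLE_log (m : ℕ) :
    GrowthLE (coprimeTotientSum 2 m) fun n => Real.log n := by
  refine GrowthLE.of_le_mul_max two_pos fun n => ?_
  have log_le : Real.log n ≤ Real.log (2 * n : ℕ) := by
    obtain rfl | hn := n.eq_zero_or_pos
    · simp
    · gcongr
      omega
  calc coprimeTotientSum 2 m n
      ≤ 1 + Real.log n := coprimeTotientSum_two_le_one_add_log m n
    _ ≤ max 1 (Real.log (2 * n : ℕ)) + max 1 (Real.log (2 * n : ℕ)) :=
        add_le_add (le_max_left _ _) (log_le.trans (le_max_right _ _))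
    _ = (2 : ℕ) * max 1 (Real.log (2 * n : ℕ)) := by push_cast; ring

theorem log_growthLE_coprimeTotientSum_two {m : ℕ} (hm : 0 < m) :
    GrowthLE (fun n => Real.log n) (coprimeTotientSum 2 m) := by
  refine GrowthLE.of_le_mul_max (c := 2 * m) (by omega) fun n => ?_
  obtain _ | n := n
  · simp only [Nat.cast_zero, Real.log_zero]
    positivity
  calc Real.log (n + 1 : ℕ)
      ≤ (2 * m : ℕ) * coprimeTotientSum 2 m (m * n + 1) :=
        log_add_one_le_two_mul_coprimeTotientSum hm n
    _ ≤ (2 * m : ℕ) * coprimeTotientSum 2 m (2 * m * (n + 1)) := by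
        gcongr
        exact coprimeTotientSum_mono 2 m (by nlinarith)
    _ ≤ (2 * m : ℕ) * max 1 (coprimeTotientSum 2 m (2 * m * (n + 1))) := by
        gcongr
        exact le_max_right _ _

/-- The partial sums `S_{2,m}(n) = Σ_{0 < i < n, gcd(i,m) = 1} φ(i)/i²` grow like `ln n`. -/
theorem totient_partial_sum_two (m : ℕ) (hm : 0 < m) :
    GrowthEquiv
      (fun n : ℕ => ∑ i ∈ Finset.Ioo 0 n,
        if Nat.gcd i m = 1 then (Nat.totient i : ℝ) / (i : ℝ) ^ 2 else 0)
      (fun n : ℕ => Real.log n) := by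
  simp only [← Finset.sum_filter]
  exact ⟨coprimeTotientSum_two_growthLE_log m, log_growthLE_coprimeTotientSum_two hm⟩
end
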